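/- Let U be an open simply connected subset of the open unit disc 𝔻 with 0 ∈ U, let g : U → 𝔻 be a holomorphic bijection with g(0) = 0 and g'(0) > 0, and write g'(0) = e^{t} (necessarily t ≥ 0). Then the closed disc {ζ : |ζ| ≤ e^{−t}/8} is contained in U, and the image g({ζ : |ζ| ≤ e^{−t}/8}) contains the closed disc {w : |w| ≤ 1/32}. -/

import Mathlib

open Metric Set

/-!
The Koebe quarter theorem for the inverse of `g` on the unit disc gives a disc of radius `e⁻ᵗ / 4`
inside `U`; the same theorem for `g` on the disc of radius `e⁻ᵗ / 8` gives the radius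
`eᵗ · (e⁻ᵗ / 8) / 4 = 1 / 32`. The inequality `t ≥ 0` is the Schwarz lemma.

The quarter theorem says that a nonvanishing injective holomorphic `f` on `|z| < R` satisfies
`|f' 0| R ≤ 4 |f 0|`. A square root `p` of `f` never takes both a value and its negative, so its
Cayley transform `h = (p - p 0) / (p + p 0)` is injective, fixes `0`, and never takes both a value
and its inverse; it remains to show `|h' 0| R ≤ 1`. Measure area in the coordinate `log z`. The
image under `h` of `r < |z| < ρ` and the inverse of that image are disjoint, have the same area, and
for `c < |h' 0|` and small `r` both lie in `c r < |w| < 1 / (c r)`. By the mean value property of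
`(z h' / h) ^ 2`, `h` does not decrease the area of the annulus, so
`2 log (ρ / r) ≤ 2 log (1 / (c r))`, that is `c ρ ≤ 1`.
-/

open Filter MeasureTheory
open scoped ENNReal Pointwise Real Topology

section Inverse

variable {f g : ℂ → ℂ} {U : Set ℂ} {z : ℂ}

theorem not_eventually_eq_of_injOn (hg : InjOn g U) (hU : U ∈ 𝓝 z) :
    ¬∀ᶠ w in 𝓝 z, g w = g z := by
  intro hconst
  have heq : ∀ᶠ w in 𝓝 z, w = z := by
    filter_upwards [hconst, hU] with w hw hwU using hg hwU (mem_of_mem_nhds hU) hw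
  obtain ⟨w, hw, hwz⟩ := ((heq.filter_mono nhdsWithin_le_nhds).and
    (self_mem_nhdsWithin : {z}ᶜ ∈ 𝓝[≠] z)).exists
  exact hwz hw

theorem nhds_le_map_nhds_of_injOn (hg : DifferentiableOn ℂ g U) (hinj : InjOn g U)
    (hU : U ∈ 𝓝 z) : 𝓝 (g z) ≤ map g (𝓝 z) :=
  (hg.analyticAt hU).eventually_constant_or_nhds_le_map_nhds.resolve_left
    (not_eventually_eq_of_injOn hinj hU)

theorem eventually_deriv_ne_zero_of_injOn (hg : DifferentiableOn ℂ g U) (hinj : InjOn g U)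
    (hU : U ∈ 𝓝 z) : ∀ᶠ w in 𝓝[≠] z, deriv g w ≠ 0 := by
  refine (hg.analyticAt hU).deriv.eventually_eq_zero_or_eventually_ne_zero.resolve_left
    fun hzero ↦ not_eventually_eq_of_injOn hinj hU ?_
  obtain ⟨ε, hε, hball⟩ := eventually_nhds_iff_ball.1
    (hzero.and (hg.analyticAt hU).eventually_analyticAt)
  filter_upwards [ball_mem_nhds z hε] with w hw
  exact isOpen_ball.is_const_of_deriv_eq_zero (convex_ball z ε).isPreconnected
    (fun v hv ↦ (hball v hv).2.differentiableAt.differentiableWithinAt)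
    (fun v hv ↦ (hball v hv).1) hw (mem_ball_self hε)

theorem continuousAt_of_leftInvOn (hg : DifferentiableOn ℂ g U) (hfg : LeftInvOn f g U)
    (hU : U ∈ 𝓝 z) : ContinuousAt f (g z) := by
  have hfg_id : f ∘ g =ᶠ[𝓝 z] id := eventually_of_mem hU hfg
  have htendsto : Tendsto f (map g (𝓝 z)) (𝓝 z) :=
    tendsto_map'_iff.2 (tendsto_id.congr' hfg_id.symm)
  rw [ContinuousAt, hfg (mem_of_mem_nhds hU)]
  exact htendsto.mono_left (nhds_le_map_nhds_of_injOn hg hfg.injOn hU)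

theorem hasDerivAt_of_leftInvOn_of_deriv_ne_zero (hg : DifferentiableOn ℂ g U)
    (hfg : LeftInvOn f g U) (hU : U ∈ 𝓝 z) (hz : deriv g z ≠ 0) :
    HasDerivAt f (deriv g z)⁻¹ (g z) := by
  have hgf : ∀ᶠ w in 𝓝 (g z), g (f w) = w :=
    nhds_le_map_nhds_of_injOn hg hfg.injOn hU <| mem_map.2 <| by
      filter_upwards [hU] with w hw using congrArg g (hfg hw)
  refine HasDerivAt.of_local_left_inverse (continuousAt_of_leftInvOn hg hfg hU) ?_ hz hgf
  rw [hfg (mem_of_mem_nhds hU)]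
  exact (hg.differentiableAt hU).hasDerivAt

-- The critical points of `g` are isolated, so they are removable singularities of the inverse.
theorem differentiableAt_of_leftInvOn (hU : IsOpen U) (hg : DifferentiableOn ℂ g U)
    (hfg : LeftInvOn f g U) (hz : z ∈ U) : DifferentiableAt ℂ f (g z) := by
  have hUz : U ∈ 𝓝 z := hU.mem_nhds hz
  have hpunctured : ∀ᶠ w in 𝓝 z, w ≠ z → DifferentiableAt ℂ f (g w) := by
    filter_upwards [eventually_nhdsWithin_iff.1
      (eventually_deriv_ne_zero_of_injOn hg hfg.injOn hUz), hUz] with w hderiv hw hwz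
    exact (hasDerivAt_of_leftInvOn_of_deriv_ne_zero hg hfg (hU.mem_nhds hw)
      (hderiv hwz)).differentiableAt
  refine (Complex.analyticAt_of_differentiable_on_punctured_nhds_of_continuousAt ?_
    (continuousAt_of_leftInvOn hg hfg hUz)).differentiableAt
  refine eventually_nhdsWithin_iff.2
    (nhds_le_map_nhds_of_injOn hg hfg.injOn hUz (mem_map.2 ?_))
  filter_upwards [hpunctured] with w hw hgw
  exact hw fun hwz ↦ hgw (congrArg g hwz)

theorem deriv_ne_zero_of_injOn (hU : IsOpen U) (hg : DifferentiableOn ℂ g U)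
    (hinj : InjOn g U) (hz : z ∈ U) : deriv g z ≠ 0 := by
  have hUz : U ∈ 𝓝 z := hU.mem_nhds hz
  have hfg : LeftInvOn (Function.invFunOn g U) g U := hinj.leftInvOn_invFunOn
  have hchain := (differentiableAt_of_leftInvOn hU hg hfg hz).hasDerivAt.comp z
    (hg.differentiableAt hUz).hasDerivAt
  have hone := hchain.unique ((hasDerivAt_id z).congr_of_eventuallyEq (eventually_of_mem hUz hfg))
  exact right_ne_zero_of_mul_eq_one hone

theorem dslope_ne_zero_of_injOn {c : ℂ} (hU : IsOpen U) (hg : DifferentiableOn ℂ g U)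
    (hinj : InjOn g U) (hc : c ∈ U) (hz : z ∈ U) : dslope g c z ≠ 0 := by
  rcases eq_or_ne z c with rfl | hzc
  · rw [dslope_same]
    exact deriv_ne_zero_of_injOn hU hg hinj hz
  · rw [dslope_of_ne g hzc, slope_def_field]
    exact div_ne_zero (sub_ne_zero.2 (hinj.ne hz hc hzc)) (sub_ne_zero.2 hzc)

theorem differentiableOn_invFunOn {V : Set ℂ} (hU : IsOpen U) (hg : DifferentiableOn ℂ g U)
    (hbij : BijOn g U V) : DifferentiableOn ℂ (Function.invFunOn g U) V := by
  rw [← hbij.image_eq]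
  rintro _ ⟨z, hz, rfl⟩
  exact (differentiableAt_of_leftInvOn hU hg hbij.injOn.leftInvOn_invFunOn
    hz).differentiableWithinAt

theorem deriv_invFunOn (hU : IsOpen U) (hg : DifferentiableOn ℂ g U) (hinj : InjOn g U)
    (hz : z ∈ U) : deriv (Function.invFunOn g U) (g z) = (deriv g z)⁻¹ :=
  (hasDerivAt_of_leftInvOn_of_deriv_ne_zero hg hinj.leftInvOn_invFunOn (hU.mem_nhds hz)
    (deriv_ne_zero_of_injOn hU hg hinj hz)).deriv

end Inverse

section Roots

theorem differentiableAt_of_comp {𝕜 E : Type*} [NontriviallyNormedField 𝕜] [CompleteSpace 𝕜]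
    [NormedAddCommGroup E] [NormedSpace 𝕜 E] {φ : 𝕜 → 𝕜} {φ' : 𝕜} {p : E → 𝕜} {z : E}
    (hφ : HasStrictDerivAt φ φ' (p z)) (hφ' : φ' ≠ 0) (hp : ContinuousAt p z)
    (hcomp : DifferentiableAt 𝕜 (φ ∘ p) z) : DifferentiableAt 𝕜 p z := by
  have hleft : ∀ᶠ w in 𝓝 z, hφ.localInverse φ φ' (p z) hφ' (φ (p w)) = p w :=
    hp.eventually (HasStrictFDerivAt.eventually_left_inverse
      (hφ.hasStrictFDerivAt_equiv hφ'))
  exact ((hφ.to_localInverse hφ').hasDerivAt.differentiableAt.comp z hcomp).congr_of_eventuallyEq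
    (hleft.mono fun _ hw ↦ hw.symm)

theorem exists_differentiableOn_pow_eq {U : Set ℂ} (hUo : IsOpen U) (hUc : IsSimplyConnected U)
    {v : ℂ → ℂ} (hv : DifferentiableOn ℂ v U) (hv0 : ∀ z ∈ U, v z ≠ 0) {n : ℕ} (hn : n ≠ 0) :
    ∃ p : ℂ → ℂ, DifferentiableOn ℂ p U ∧ ∀ z, p z ^ n = v z := by
  obtain ⟨p, hpc, hpn⟩ := Complex.exists_continuousOn_pow_eq hUc hUo hv.continuousOn
    (by rintro ⟨z, hz, hvz⟩; exact hv0 z hz hvz) hn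
  refine ⟨p, fun z hz ↦ ?_, hpn⟩
  have hpz : p z ≠ 0 := fun h ↦ hv0 z hz (by rw [← hpn, h, zero_pow hn])
  refine (differentiableAt_of_comp (hasStrictDerivAt_pow n (p z))
    (mul_ne_zero (Nat.cast_ne_zero.2 hn) (pow_ne_zero _ hpz))
    (hpc.continuousAt (hUo.mem_nhds hz)) ?_).differentiableWithinAt
  rw [show (fun x ↦ x ^ n) ∘ p = v from funext hpn]
  exact hv.differentiableAt (hUo.mem_nhds hz)

theorem isSimplyConnected_of_convex {E : Type*} [AddCommGroup E] [Module ℝ E]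
    [TopologicalSpace E] [ContinuousAdd E] [ContinuousSMul ℝ E] {s : Set E} (hs : Convex ℝ s)
    (hne : s.Nonempty) : IsSimplyConnected s :=
  have := hs.contractibleSpace hne
  SimplyConnectedSpace.ofContractible s

end Roots

/-- The open annulus `a < |z| < b` around the origin. -/
def annulus (a b : ℝ) : Set ℂ := {z | ‖z‖ ∈ Ioo a b}

theorem isOpen_annulus (a b : ℝ) : IsOpen (annulus a b) := isOpen_Ioo.preimage continuous_norm

theorem measurableSet_annulus (a b : ℝ) : MeasurableSet (annulus a b) :=
  (isOpen_annulus a b).measurableSet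

theorem annulus_subset_ball (a b : ℝ) : annulus a b ⊆ ball 0 b :=
  fun _ hz ↦ mem_ball_zero_iff.2 hz.2

theorem ne_zero_of_mem_annulus {a b : ℝ} (ha : 0 ≤ a) {z : ℂ} (hz : z ∈ annulus a b) : z ≠ 0 :=
  norm_pos_iff.1 (ha.trans_lt hz.1)

theorem circleMap_mem_annulus {a b s : ℝ} (ha : 0 ≤ a) (hs : s ∈ Ioo a b) (θ : ℝ) :
    circleMap 0 s θ ∈ annulus a b := by
  simpa [annulus, abs_of_pos (ha.trans_lt hs.1)] using hs

/-- Area with respect to the metric `|dz| / |z|`, i.e. Euclidean area in the coordinate `log z`.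
The density is `0` rather than `∞` at the origin, which is a null set. -/
noncomputable def logArea : Measure ℂ := volume.withDensity fun z ↦ ‖z⁻¹‖ₑ ^ 2

theorem setLIntegral_logArea {s : Set ℂ} (hs : MeasurableSet s) (F : ℂ → ℝ≥0∞) :
    ∫⁻ z in s, F z ∂logArea = ∫⁻ z in s, ‖z⁻¹‖ₑ ^ 2 * F z :=
  setLIntegral_withDensity_eq_setLIntegral_mul_non_measurable volume (by fun_prop) F hs
    (.of_forall fun _ ↦ ENNReal.pow_lt_top enorm_lt_top)

theorem logArea_apply {s : Set ℂ} (hs : MeasurableSet s) :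
    logArea s = ∫⁻ z in s, ‖z⁻¹‖ₑ ^ 2 :=
  withDensity_apply _ hs

section ChangeOfVariables

variable {f f' : ℂ → ℂ} {s : Set ℂ}

theorem measurableSet_image_of_hasDerivAt (hs : MeasurableSet s)
    (hf : ∀ z ∈ s, HasDerivAt f (f' z) z) (hinj : InjOn f s) : MeasurableSet (f '' s) :=
  measurable_image_of_fderivWithin hs
    (fun z hz ↦ ((hf z hz).hasFDerivAt.restrictScalars ℝ).hasFDerivWithinAt) hinj

theorem abs_det_restrictScalars_toSpanSingleton (a : ℂ) :
    |((ContinuousLinearMap.toSpanSingleton ℂ a).restrictScalars ℝ).det| = ‖a‖ ^ 2 := by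
  have hdet : LinearMap.det (ContinuousLinearMap.toSpanSingleton ℂ a : ℂ →ₗ[ℂ] ℂ) = a :=
    ContinuousLinearMap.det_toSpanSingleton a
  rw [ContinuousLinearMap.det, ContinuousLinearMap.coe_restrictScalars,
    LinearMap.det_restrictScalars, hdet, Algebra.norm_complex_apply, Complex.normSq_eq_norm_sq,
    abs_sq]

theorem setLIntegral_image_of_hasDerivAt (hs : MeasurableSet s)
    (hf : ∀ z ∈ s, HasDerivAt f (f' z) z) (hinj : InjOn f s) (G : ℂ → ℝ≥0∞) :
    ∫⁻ w in f '' s, G w = ∫⁻ z in s, ‖f' z‖ₑ ^ 2 * G (f z) := by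
  rw [lintegral_image_eq_lintegral_abs_det_fderiv_mul volume hs
    (fun z hz ↦ ((hf z hz).hasFDerivAt.restrictScalars ℝ).hasFDerivWithinAt) hinj]
  simp only [abs_det_restrictScalars_toSpanSingleton, ENNReal.ofReal_pow (norm_nonneg _),
    ofReal_norm]

theorem logArea_image (hs : MeasurableSet s) (hf : ∀ z ∈ s, HasDerivAt f (f' z) z)
    (hinj : InjOn f s) : logArea (f '' s) = ∫⁻ z in s, ‖f' z / f z‖ₑ ^ 2 := by
  rw [logArea_apply (measurableSet_image_of_hasDerivAt hs hf hinj),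
    setLIntegral_image_of_hasDerivAt hs hf hinj]
  simp only [div_eq_mul_inv, enorm_mul, mul_pow]

theorem logArea_inv (hs : MeasurableSet s) (hs0 : 0 ∉ s) : logArea s⁻¹ = logArea s := by
  rw [← image_inv_eq_inv, logArea_image hs
    (fun z hz ↦ hasDerivAt_inv (ne_of_mem_of_not_mem hz hs0)) inv_injective.injOn,
    logArea_apply hs]
  refine setLIntegral_congr_fun hs fun z hz ↦ ?_
  have hz0 : z ≠ 0 := ne_of_mem_of_not_mem hz hs0
  have hlog : -(z ^ 2)⁻¹ / z⁻¹ = -z⁻¹ := by field_simp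
  simp only [hlog, enorm_neg]

end ChangeOfVariables

section Polar

variable {a b : ℝ}

theorem polarCoord_symm_eq_circleMap (p : ℝ × ℝ) :
    Complex.polarCoord.symm p = circleMap 0 p.1 p.2 := by
  simp [circleMap, Complex.exp_mul_I]

theorem setLIntegral_annulus_eq_prod (ha : 0 ≤ a) (F : ℂ → ℝ≥0∞) :
    ∫⁻ z in annulus a b, F z =
      ∫⁻ p in Ioo a b ×ˢ Ioo (-π) π, ENNReal.ofReal p.1 * F (circleMap 0 p.1 p.2) := by
  have hsubset : Ioo a b ×ˢ Ioo (-π) π ⊆ polarCoord.target :=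
    fun p hp ↦ ⟨ha.trans_lt hp.1.1, hp.2⟩
  have hindicator : ∀ p ∈ polarCoord.target,
      ENNReal.ofReal p.1 • (annulus a b).indicator F (Complex.polarCoord.symm p) =
        (Ioo a b ×ˢ Ioo (-π) π).indicator
          (fun p ↦ ENNReal.ofReal p.1 * F (circleMap 0 p.1 p.2)) p := by
    intro p hp
    have hmem : circleMap 0 p.1 p.2 ∈ annulus a b ↔ p ∈ Ioo a b ×ˢ Ioo (-π) π := by
      rw [annulus, mem_ofPred_eq, norm_circleMap_zero, abs_of_pos hp.1]
      exact (and_iff_left hp.2).symm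
    rw [polarCoord_symm_eq_circleMap, smul_eq_mul]
    by_cases hpS : p ∈ Ioo a b ×ˢ Ioo (-π) π
    · rw [indicator_of_mem (hmem.2 hpS), indicator_of_mem hpS]
    · rw [indicator_of_notMem (mt hmem.1 hpS), indicator_of_notMem hpS, mul_zero]
  rw [← lintegral_indicator (measurableSet_annulus a b), ← Complex.lintegral_comp_polarCoord_symm,
    setLIntegral_congr_fun polarCoord.open_target.measurableSet hindicator,
    setLIntegral_indicator (measurableSet_Ioo.prod measurableSet_Ioo), inter_eq_left.2 hsubset]

theorem setLIntegral_annulus (ha : 0 ≤ a) {F : ℂ → ℝ≥0∞} (hF : ContinuousOn F (annulus a b)) :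
    ∫⁻ z in annulus a b, F z =
      ∫⁻ s in Ioo a b, ENNReal.ofReal s * ∫⁻ θ in Ioo (-π) π, F (circleMap 0 s θ) := by
  have hcircle : Continuous fun p : ℝ × ℝ ↦ circleMap 0 p.1 p.2 := by
    unfold circleMap
    fun_prop
  have hcomp : ContinuousOn (fun p : ℝ × ℝ ↦ F (circleMap 0 p.1 p.2))
      (Ioo a b ×ˢ Ioo (-π) π) :=
    hF.comp hcircle.continuousOn fun p hp ↦ circleMap_mem_annulus ha hp.1 p.2
  rw [setLIntegral_annulus_eq_prod ha, Measure.volume_eq_prod, setLIntegral_prod]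
  · simp only [lintegral_const_mul' _ _ ENNReal.ofReal_ne_top]
  · exact measurable_fst.ennreal_ofReal.aemeasurable.mul
      (hcomp.aemeasurable (measurableSet_Ioo.prod measurableSet_Ioo))

theorem setLIntegral_annulus_logArea (ha : 0 ≤ a) {F : ℂ → ℝ≥0∞}
    (hF : ContinuousOn F (annulus a b)) :
    ∫⁻ z in annulus a b, F z ∂logArea =
      ∫⁻ s in Ioo a b, ENNReal.ofReal s⁻¹ * ∫⁻ θ in Ioo (-π) π, F (circleMap 0 s θ) := by
  have hinv : ContinuousOn (fun z : ℂ ↦ ‖z⁻¹‖ₑ ^ 2) (annulus a b) :=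
    (ENNReal.continuous_pow 2).comp_continuousOn
      (continuousOn_id.inv₀ fun z hz ↦ ne_zero_of_mem_annulus ha hz).enorm
  rw [setLIntegral_logArea (measurableSet_annulus a b), setLIntegral_annulus ha]
  · refine setLIntegral_congr_fun measurableSet_Ioo fun s hs ↦ ?_
    have hs0 : 0 < s := ha.trans_lt hs.1
    have hdensity (θ : ℝ) : ‖(circleMap 0 s θ)⁻¹‖ₑ ^ 2 = ENNReal.ofReal (s⁻¹ ^ 2) := by
      rw [← ofReal_norm, norm_inv, norm_circleMap_zero, abs_of_pos hs0,
        ENNReal.ofReal_pow (by positivity)]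
    simp only [hdensity]
    rw [lintegral_const_mul' _ _ ENNReal.ofReal_ne_top, ← mul_assoc, ← ENNReal.ofReal_mul hs0.le]
    congr 2
    field_simp
  · refine hinv.ennreal_mul hF (fun z hz ↦ .inl ?_) (fun z _ ↦ .inr ?_)
    · exact pow_ne_zero 2 (enorm_ne_zero.2 (inv_ne_zero (ne_zero_of_mem_annulus ha hz)))
    · exact ENNReal.pow_ne_top enorm_ne_top

theorem lintegral_Ioo_inv (ha : 0 < a) (hab : a ≤ b) :
    ∫⁻ s in Ioo a b, ENNReal.ofReal s⁻¹ = ENNReal.ofReal (Real.log (b / a)) := by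
  have hint : IntervalIntegrable (fun s : ℝ ↦ s⁻¹) volume a b :=
    intervalIntegral.intervalIntegrable_inv (fun s hs ↦ by
      rw [uIcc_of_le hab] at hs
      exact (ha.trans_le hs.1).ne') continuousOn_id
  have hnonneg : 0 ≤ᵐ[volume.restrict (Ioo a b)] fun s : ℝ ↦ s⁻¹ := by
    filter_upwards [ae_restrict_mem measurableSet_Ioo] with s hs
    exact inv_nonneg.2 (ha.trans hs.1).le
  rw [← ofReal_integral_eq_lintegral_ofReal
      ((intervalIntegrable_iff_integrableOn_Ioo_of_le hab).1 hint) hnonneg,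
    ← integral_Ioc_eq_integral_Ioo, ← intervalIntegral.integral_of_le hab,
    integral_inv_of_pos ha (ha.trans_le hab)]

theorem logArea_annulus (ha : 0 < a) (hab : a ≤ b) :
    logArea (annulus a b) = ENNReal.ofReal (2 * π) * ENNReal.ofReal (Real.log (b / a)) := by
  rw [← setLIntegral_one, setLIntegral_annulus_logArea ha.le continuousOn_const]
  simp only [setLIntegral_one, Real.volume_Ioo]
  rw [lintegral_mul_const' _ _ ENNReal.ofReal_ne_top, lintegral_Ioo_inv ha hab, mul_comm]
  ring_nf

theorem two_pi_mul_enorm_le_lintegral_circleMap {E : Type*} [NormedAddCommGroup E]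
    [NormedSpace ℂ E] [CompleteSpace E] {φ : ℂ → E} {c : ℂ} {R : ℝ}
    (hφ : DiffContOnCl ℂ φ (ball c |R|)) :
    ENNReal.ofReal (2 * π) * ‖φ c‖ₑ ≤ ∫⁻ θ in Ioo (-π) π, ‖φ (circleMap c R θ)‖ₑ := by
  have hπ : -π ≤ π := by linarith [Real.pi_pos]
  have hshift : ∫ θ in (0)..(2 * π), φ (circleMap c R θ) = ∫ θ in -π..π, φ (circleMap c R θ) := by
    have := ((periodic_circleMap c R).comp φ).intervalIntegral_add_eq 0 (-π)
    simpa [Function.comp_def, show -π + 2 * π = π by ring] using this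
  have hmean : (2 * π) • φ c = ∫ θ in Ioo (-π) π, φ (circleMap c R θ) := by
    rw [← hφ.circleAverage, Real.circleAverage_def, smul_inv_smul₀ Real.two_pi_pos.ne', hshift,
      intervalIntegral.integral_of_le hπ, integral_Ioc_eq_integral_Ioo]
  calc ENNReal.ofReal (2 * π) * ‖φ c‖ₑ = ‖(2 * π) • φ c‖ₑ := by
        rw [enorm_smul, Real.enorm_of_nonneg Real.two_pi_pos.le]
    _ ≤ ∫⁻ θ in Ioo (-π) π, ‖φ (circleMap c R θ)‖ₑ := by
        rw [hmean]; exact enorm_integral_le_lintegral_enorm _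

end Polar

theorem enorm_mul_logArea_annulus_le {E : Type*} [NormedAddCommGroup E] [NormedSpace ℂ E]
    [CompleteSpace E] {φ : ℂ → E} {a b : ℝ} (ha : 0 ≤ a) (hφ : DifferentiableOn ℂ φ (ball 0 b)) :
    ‖φ 0‖ₑ * logArea (annulus a b) ≤ ∫⁻ z in annulus a b, ‖φ z‖ₑ ∂logArea := by
  have hcont : ContinuousOn (fun z ↦ ‖φ z‖ₑ) (annulus a b) :=
    (hφ.continuousOn.mono (annulus_subset_ball a b)).enorm
  rw [← setLIntegral_one, ← lintegral_const_mul' _ _ enorm_ne_top,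
    setLIntegral_annulus_logArea ha continuousOn_const, setLIntegral_annulus_logArea ha hcont]
  refine setLIntegral_mono' measurableSet_Ioo fun s hs ↦ ?_
  have hdisc : DiffContOnCl ℂ φ (ball 0 |s|) := by
    rw [abs_of_pos (ha.trans_lt hs.1)]
    exact (hφ.mono (closedBall_subset_ball hs.2)).diffContOnCl_ball subset_rfl
  have hcircle := two_pi_mul_enorm_le_lintegral_circleMap hdisc
  refine mul_le_mul_right (le_of_eq_of_le ?_ hcircle) _
  rw [setLIntegral_const, Real.volume_Ioo, sub_neg_eq_add, ← two_mul, mul_one, mul_comm]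

theorem deriv_div_eq_inv_mul_deriv_div_dslope {f : ℂ → ℂ} (hf0 : f 0 = 0) {z : ℂ} (hz : z ≠ 0) :
    deriv f z / f z = z⁻¹ * (deriv f z / dslope f 0 z) := by
  rw [dslope_of_ne f hz, slope_def_field, hf0, sub_zero, sub_zero]
  field_simp

-- The pull-back of `logArea` under `f` has density `|z f' / f|²` relative to `logArea`, and
-- `z f' / f` extends holomorphically to `0` with value `1`.
theorem logArea_annulus_le_logArea_image {f : ℂ → ℂ} {a b : ℝ} (ha : 0 ≤ a) (hb : 0 < b)
    (hf : DifferentiableOn ℂ f (ball 0 b)) (hinj : InjOn f (ball 0 b)) (hf0 : f 0 = 0) :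
    logArea (annulus a b) ≤ logArea (f '' annulus a b) := by
  have h0 : (0 : ℂ) ∈ ball 0 b := mem_ball_self hb
  have hsubset := annulus_subset_ball a b
  let ψ : ℂ → ℂ := fun z ↦ deriv f z / dslope f 0 z
  have hψ : DifferentiableOn ℂ ψ (ball 0 b) := (hf.deriv isOpen_ball).div
    ((Complex.differentiableOn_dslope (isOpen_ball.mem_nhds h0)).2 hf)
    fun z hz ↦ dslope_ne_zero_of_injOn isOpen_ball hf hinj h0 hz
  have hψ0 : ψ 0 = 1 := by
    change deriv f 0 / dslope f 0 0 = 1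
    rw [dslope_same]
    exact div_self (deriv_ne_zero_of_injOn isOpen_ball hf hinj h0)
  calc logArea (annulus a b) = ‖ψ 0 ^ 2‖ₑ * logArea (annulus a b) := by
        rw [hψ0, one_pow, enorm_one, one_mul]
    _ ≤ ∫⁻ z in annulus a b, ‖ψ z ^ 2‖ₑ ∂logArea :=
        enorm_mul_logArea_annulus_le (φ := fun z ↦ ψ z ^ 2) ha (hψ.pow 2)
    _ = ∫⁻ z in annulus a b, ‖deriv f z / f z‖ₑ ^ 2 := by
        rw [setLIntegral_logArea (measurableSet_annulus a b)]
        refine setLIntegral_congr_fun (measurableSet_annulus a b) fun z hz ↦ ?_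
        simp only [deriv_div_eq_inv_mul_deriv_div_dslope hf0 (ne_zero_of_mem_annulus ha hz),
          enorm_mul, enorm_pow, mul_pow, ψ]
    _ = logArea (f '' annulus a b) :=
        (logArea_image (measurableSet_annulus a b)
          (fun z hz ↦ (hf.differentiableAt (isOpen_ball.mem_nhds (hsubset hz))).hasDerivAt)
          (hinj.mono hsubset)).symm

theorem two_mul_logArea_le_of_disjoint_inv {E : Set ℂ} {m : ℝ} (hm : 0 < m)
    (hE : MeasurableSet E) (hsubset : E ⊆ annulus m m⁻¹) (hdisj : Disjoint E E⁻¹) :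
    2 * logArea E ≤ logArea (annulus m m⁻¹) := by
  have hE0 : 0 ∉ E := fun h ↦ ne_zero_of_mem_annulus hm.le (hsubset h) rfl
  have hsubset_inv : E⁻¹ ⊆ annulus m m⁻¹ := by
    intro z hz
    obtain ⟨hlower, hupper⟩ := hsubset hz
    rw [norm_inv] at hlower hupper
    have hz0 : 0 < ‖z‖ := inv_pos.1 (hm.trans hlower)
    exact ⟨(inv_lt_inv₀ hz0 hm).1 hupper, (lt_inv_comm₀ hm hz0).1 hlower⟩
  calc 2 * logArea E = logArea E + logArea E⁻¹ := by rw [logArea_inv hE hE0, two_mul]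
    _ = logArea (E ∪ E⁻¹) := (measure_union hdisj hE.inv).symm
    _ ≤ logArea (annulus m m⁻¹) := measure_mono (union_subset hsubset hsubset_inv)

section BieberbachEilenberg

variable {f : ℂ → ℂ} {c ρ : ℝ}

theorem eventually_mul_norm_lt_norm (hf : DifferentiableAt ℂ f 0) (hf0 : f 0 = 0)
    (hc : c < ‖deriv f 0‖) : ∀ᶠ z in 𝓝[≠] 0, c * ‖z‖ < ‖f z‖ := by
  filter_upwards [hf.hasDerivAt.tendsto_slope.norm.eventually_const_lt hc, self_mem_nhdsWithin]
    with z hslope hz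
  rwa [slope_def_field, hf0, sub_zero, sub_zero, norm_div, lt_div_iff₀ (norm_pos_iff.2 hz)]
    at hslope

theorem eventually_forall_annulus_mul_lt_norm (hc0 : 0 ≤ c)
    (hcont : ContinuousOn f (closedBall 0 ρ)) (hf : DifferentiableAt ℂ f 0) (hf0 : f 0 = 0)
    (hne : ∀ z ∈ closedBall 0 ρ, z ≠ 0 → f z ≠ 0) (hc : c < ‖deriv f 0‖) :
    ∀ᶠ r in 𝓝[>] 0, ∀ z ∈ annulus r ρ, c * r < ‖f z‖ := by
  obtain ⟨s, hs, hnear⟩ := eventually_nhds_iff_ball.1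
    (eventually_nhdsWithin_iff.1 (eventually_mul_norm_lt_norm hf hf0 hc))
  obtain ⟨δ, hδ, hfar⟩ : ∃ δ, 0 < δ ∧ ∀ z ∈ closedBall 0 ρ \ ball 0 s, δ ≤ ‖f z‖ := by
    refine ((isCompact_closedBall 0 ρ).diff isOpen_ball).exists_forall_le'
      (hcont.mono sdiff_subset).norm fun z hz ↦ norm_pos_iff.2 (hne z hz.1 ?_)
    rintro rfl
    exact hz.2 (mem_ball_self hs)
  have hsmall : ∀ᶠ r in 𝓝[>] (0 : ℝ), c * r < δ :=
    (Continuous.tendsto' (by fun_prop) 0 0 (mul_zero c)).mono_left nhdsWithin_le_nhds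
      |>.eventually_lt_const hδ
  filter_upwards [hsmall, self_mem_nhdsWithin] with r hr hr0 z hz
  by_cases hzs : z ∈ ball 0 s
  · calc c * r ≤ c * ‖z‖ := by gcongr; exact hz.1.le
      _ < ‖f z‖ := hnear z hzs (ne_zero_of_mem_annulus (mem_Ioi.1 hr0).le hz)
  · exact hr.trans_le (hfar z ⟨mem_closedBall_zero_iff.2 hz.2.le, hzs⟩)

theorem eventually_image_annulus_subset (hc0 : 0 < c)
    (hcont : ContinuousOn f (closedBall 0 ρ)) (hf : DifferentiableAt ℂ f 0) (hf0 : f 0 = 0)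
    (hne : ∀ z ∈ closedBall 0 ρ, z ≠ 0 → f z ≠ 0) (hc : c < ‖deriv f 0‖) :
    ∀ᶠ r in 𝓝[>] 0, f '' annulus r ρ ⊆ annulus (c * r) (c * r)⁻¹ := by
  obtain ⟨M, hM⟩ := (isCompact_closedBall 0 ρ).exists_bound_of_continuousOn hcont
  have hlarge : Tendsto (fun r : ℝ ↦ (c * r)⁻¹) (𝓝[>] 0) atTop := by
    simp only [mul_inv]
    exact tendsto_inv_nhdsGT_zero.const_mul_atTop (inv_pos.2 hc0)
  filter_upwards [eventually_forall_annulus_mul_lt_norm hc0.le hcont hf hf0 hne hc,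
    hlarge.eventually_gt_atTop M] with r hlower hr
  rintro _ ⟨z, hz, rfl⟩
  exact ⟨hlower z hz, (hM z (mem_closedBall_zero_iff.2 hz.2.le)).trans_lt hr⟩

theorem mul_le_one_of_two_mul_logArea_le {r : ℝ} (hc : 0 < c) (hr : 0 < r) (hrρ : r ≤ ρ)
    (hcr : c * r ≤ 1)
    (h : 2 * logArea (annulus r ρ) ≤ logArea (annulus (c * r) (c * r)⁻¹)) : c * ρ ≤ 1 := by
  have hρ : 0 < ρ := hr.trans_le hrρ
  have hm : 0 < c * r := mul_pos hc hr
  have hm_inv : c * r ≤ (c * r)⁻¹ := hcr.trans ((one_le_inv₀ hm).2 hcr)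
  have hlog : 0 ≤ Real.log ((c * r)⁻¹ / (c * r)) := Real.log_nonneg ((one_le_div hm).2 hm_inv)
  rw [logArea_annulus hr hrρ, logArea_annulus hm hm_inv, mul_left_comm,
    ENNReal.mul_le_mul_iff_right (by simp [Real.pi_pos]) ENNReal.ofReal_ne_top,
    ← ENNReal.ofReal_ofNat 2, ← ENNReal.ofReal_mul zero_le_two,
    ENNReal.ofReal_le_ofReal_iff hlog, Real.log_div hρ.ne' hr.ne',
    Real.log_div (inv_ne_zero hm.ne') hm.ne', Real.log_inv, Real.log_mul hc.ne' hr.ne'] at h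
  rw [← Real.log_nonpos_iff (mul_pos hc hρ).le, Real.log_mul hc.ne' hρ.ne']
  linarith

theorem two_mul_logArea_annulus_le_of_mul_ne_one {r m : ℝ} (hr : 0 ≤ r) (hρ : 0 < ρ) (hm : 0 < m)
    (hf : DifferentiableOn ℂ f (ball 0 ρ)) (hinj : InjOn f (ball 0 ρ)) (hf0 : f 0 = 0)
    (hmul : ∀ z ∈ ball 0 ρ, ∀ w ∈ ball 0 ρ, f z * f w ≠ 1)
    (hsubset : f '' annulus r ρ ⊆ annulus m m⁻¹) :
    2 * logArea (annulus r ρ) ≤ logArea (annulus m m⁻¹) := by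
  have hball := annulus_subset_ball r ρ
  have hmeas : MeasurableSet (f '' annulus r ρ) :=
    measurableSet_image_of_hasDerivAt (measurableSet_annulus r ρ)
      (fun z hz ↦ (hf.differentiableAt (isOpen_ball.mem_nhds (hball hz))).hasDerivAt)
      (hinj.mono hball)
  have hdisj : Disjoint (f '' annulus r ρ) (f '' annulus r ρ)⁻¹ := by
    rw [disjoint_left]
    rintro _ ⟨z, hz, rfl⟩ ⟨w, hw, hwz⟩
    refine hmul z (hball hz) w (hball hw) ?_
    rw [hwz, mul_inv_cancel₀ (ne_zero_of_mem_annulus hm.le (hsubset (mem_image_of_mem f hz)))]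
  calc 2 * logArea (annulus r ρ) ≤ 2 * logArea (f '' annulus r ρ) :=
        mul_le_mul_right (logArea_annulus_le_logArea_image hr hρ hf hinj hf0) 2
    _ ≤ logArea (annulus m m⁻¹) := two_mul_logArea_le_of_disjoint_inv hm hmeas hsubset hdisj

theorem norm_deriv_mul_le_one_of_mul_ne_one {R : ℝ} (hR : 0 < R)
    (hf : DifferentiableOn ℂ f (ball 0 R)) (hinj : InjOn f (ball 0 R)) (hf0 : f 0 = 0)
    (hmul : ∀ z ∈ ball 0 R, ∀ w ∈ ball 0 R, f z * f w ≠ 1) : ‖deriv f 0‖ * R ≤ 1 := by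
  have h0 : (0 : ℂ) ∈ ball 0 R := mem_ball_self hR
  have hne : ∀ z ∈ ball 0 R, z ≠ 0 → f z ≠ 0 :=
    fun z hz hz0 hfz ↦ hz0 (hinj hz h0 (hfz.trans hf0.symm))
  refine mul_le_of_forall_lt_of_nonneg (norm_nonneg _) zero_le_one fun c hc0 hc ρ hρ0 hρ ↦ ?_
  rcases hc0.eq_or_lt with rfl | hc0
  · simp
  rcases hρ0.eq_or_lt with rfl | hρ0
  · simp
  have hball : ball (0 : ℂ) ρ ⊆ ball 0 R := ball_subset_ball hρ.le
  have hclosed : closedBall (0 : ℂ) ρ ⊆ ball 0 R := closedBall_subset_ball hρ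
  have hsmall : ∀ᶠ r in 𝓝[>] (0 : ℝ), c * r < 1 :=
    (Continuous.tendsto' (by fun_prop) 0 0 (mul_zero c)).mono_left nhdsWithin_le_nhds
      |>.eventually_lt_const one_pos
  obtain ⟨r, hsubset, hcr, hr0, hrρ⟩ := ((eventually_image_annulus_subset hc0
    (hf.continuousOn.mono hclosed) (hf.differentiableAt (isOpen_ball.mem_nhds h0)) hf0
    (fun z hz ↦ hne z (hclosed hz)) hc).and (hsmall.and (Ioo_mem_nhdsGT hρ0))).exists
  exact mul_le_one_of_two_mul_logArea_le hc0 hr0 hrρ.le hcr.le <|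
    two_mul_logArea_annulus_le_of_mul_ne_one hr0.le hρ0 (mul_pos hc0 hr0) (hf.mono hball)
      (hinj.mono hball) hf0 (fun z hz w hw ↦ hmul z (hball hz) w (hball hw)) hsubset

end BieberbachEilenberg

section Koebe

variable {f : ℂ → ℂ} {R : ℝ}

theorem norm_deriv_mul_le_of_add_ne_zero (hR : 0 < R) (hf : DifferentiableOn ℂ f (ball 0 R))
    (hinj : InjOn f (ball 0 R)) (hadd : ∀ z ∈ ball 0 R, ∀ w ∈ ball 0 R, f z + f w ≠ 0) :
    ‖deriv f 0‖ * R ≤ 2 * ‖f 0‖ := by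
  have h0 : (0 : ℂ) ∈ ball 0 R := mem_ball_self hR
  have hf0 : f 0 ≠ 0 := fun h ↦ hadd 0 h0 0 h0 (by rw [h, add_zero])
  have hden : ∀ z ∈ ball 0 R, f z + f 0 ≠ 0 := fun z hz ↦ hadd z hz 0 h0
  have hdiff {z : ℂ} (hz : z ∈ ball 0 R) : HasDerivAt f (deriv f z) z :=
    (hf.differentiableAt (isOpen_ball.mem_nhds hz)).hasDerivAt
  have hq_inj : InjOn (fun z ↦ (f z - f 0) / (f z + f 0)) (ball 0 R) := by
    intro z hz w hw hzw
    rw [div_eq_div_iff (hden z hz) (hden w hw)] at hzw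
    refine hinj hz hw (mul_left_cancel₀ (mul_ne_zero two_ne_zero hf0) ?_)
    linear_combination hzw
  have hq_mul : ∀ z ∈ ball 0 R, ∀ w ∈ ball 0 R,
      (f z - f 0) / (f z + f 0) * ((f w - f 0) / (f w + f 0)) ≠ 1 := by
    intro z hz w hw hzw
    rw [div_mul_div_comm, div_eq_one_iff_eq (mul_ne_zero (hden z hz) (hden w hw))] at hzw
    refine mul_ne_zero (mul_ne_zero two_ne_zero hf0) (hadd z hz w hw) ?_
    linear_combination -hzw
  have hq_deriv : deriv (fun z ↦ (f z - f 0) / (f z + f 0)) 0 = deriv f 0 / (2 * f 0) := by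
    rw [(((hdiff h0).sub_const (f 0)).fun_div ((hdiff h0).add_const (f 0)) (hden 0 h0)).deriv]
    field_simp
    ring
  have hbound := norm_deriv_mul_le_one_of_mul_ne_one hR
    ((hf.sub_const (f 0)).fun_div (hf.add_const (f 0)) hden) hq_inj (by simp) hq_mul
  rwa [hq_deriv, norm_div, div_mul_eq_mul_div,
    div_le_one (norm_pos_iff.2 (mul_ne_zero two_ne_zero hf0)), norm_mul, Complex.norm_ofNat]
    at hbound

theorem norm_deriv_mul_le_four_mul_norm_of_ne (hR : 0 < R) (hf : DifferentiableOn ℂ f (ball 0 R))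
    (hinj : InjOn f (ball 0 R)) (hne : ∀ z ∈ ball 0 R, f z ≠ 0) :
    ‖deriv f 0‖ * R ≤ 4 * ‖f 0‖ := by
  have h0 : (0 : ℂ) ∈ ball 0 R := mem_ball_self hR
  obtain ⟨p, hp, hp_sq⟩ := exists_differentiableOn_pow_eq isOpen_ball
    (isSimplyConnected_of_convex (convex_ball 0 R) ⟨0, h0⟩) hf hne two_ne_zero
  have hp_inj : InjOn p (ball 0 R) :=
    fun z hz w hw hzw ↦ hinj hz hw (by rw [← hp_sq, ← hp_sq, hzw])
  have hp_add : ∀ z ∈ ball 0 R, ∀ w ∈ ball 0 R, p z + p w ≠ 0 := by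
    intro z hz w hw hzw
    obtain rfl : z = w := hinj hz hw (by
      rw [← hp_sq, ← hp_sq, eq_neg_of_add_eq_zero_left hzw, neg_sq])
    exact hne z hz (by rw [← hp_sq, self_eq_neg.1 (eq_neg_of_add_eq_zero_left hzw), sq, zero_mul])
  have hderiv : deriv f 0 = 2 * p 0 * deriv p 0 := by
    have hp_deriv := (hp.differentiableAt (isOpen_ball.mem_nhds h0)).hasDerivAt.pow 2
    rw [← show p ^ 2 = f from funext hp_sq, hp_deriv.deriv]
    simp
  calc ‖deriv f 0‖ * R = 2 * ‖p 0‖ * (‖deriv p 0‖ * R) := by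
        rw [hderiv, norm_mul, norm_mul, Complex.norm_ofNat, mul_assoc]
    _ ≤ 2 * ‖p 0‖ * (2 * ‖p 0‖) :=
        mul_le_mul_of_nonneg_left (norm_deriv_mul_le_of_add_ne_zero hR hp hp_inj hp_add)
          (by positivity)
    _ = 4 * ‖f 0‖ := by
        rw [← hp_sq, norm_pow]
        ring

theorem koebe_quarter {c : ℂ} (hf : DifferentiableOn ℂ f (ball c R)) (hinj : InjOn f (ball c R)) :
    ball (f c) (‖deriv f c‖ * R / 4) ⊆ f '' ball c R := by
  intro w hw
  by_contra hw_image
  have hR : 0 < R := pos_of_mul_pos_right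
    ((div_pos_iff_of_pos_right four_pos).1 (pos_of_mem_ball hw)) (norm_nonneg _)
  have hmaps : MapsTo (c + ·) (ball 0 R) (ball c R) := by
    intro z hz
    simpa [dist_eq_norm] using hz
  have hbound := norm_deriv_mul_le_four_mul_norm_of_ne (f := fun z ↦ f (c + z) - w) hR
    ((hf.comp (by fun_prop) hmaps).sub_const w)
    (fun z hz z' hz' h ↦ add_left_cancel (hinj (hmaps hz) (hmaps hz') (sub_left_injective h)))
    (fun z hz h ↦ hw_image ⟨c + z, hmaps hz, sub_eq_zero.1 h⟩)
  rw [deriv_sub_const, deriv_comp_const_add, add_zero, ← dist_eq_norm, dist_comm] at hbound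
  linarith [mem_ball.1 hw]

theorem koebe_quarter_closedBall {c : ℂ} (hR : 0 < R) (hf : DiffContOnCl ℂ f (ball c R))
    (hinj : InjOn f (ball c R)) :
    closedBall (f c) (‖deriv f c‖ * R / 4) ⊆ f '' closedBall c R := by
  have hderiv : deriv f c ≠ 0 :=
    deriv_ne_zero_of_injOn isOpen_ball hf.differentiableOn hinj (mem_ball_self hR)
  have hclosed : IsClosed (f '' closedBall c R) :=
    ((isCompact_closedBall c R).image_of_continuousOn hf.continuousOn_ball).isClosed
  rw [← closure_ball (f c) (by positivity)]
  exact closure_minimal ((koebe_quarter hf.differentiableOn hinj).trans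
    (image_mono ball_subset_closedBall)) hclosed

end Koebe

section ConformalMap

variable {g : ℂ → ℂ} {U : Set ℂ} {z : ℂ} {R : ℝ}

theorem ball_subset_of_bijOn_ball (hU : IsOpen U) (hg : DifferentiableOn ℂ g U) (hz : z ∈ U)
    (hbij : BijOn g U (ball (g z) R)) : ball z (‖deriv g z‖⁻¹ * R / 4) ⊆ U := by
  have hkoebe := koebe_quarter (differentiableOn_invFunOn hU hg hbij)
    hbij.surjOn.rightInvOn_invFunOn.injOn
  rw [hbij.injOn.leftInvOn_invFunOn hz, deriv_invFunOn hU hg hbij.injOn hz, norm_inv] at hkoebe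
  exact hkoebe.trans hbij.surjOn.mapsTo_invFunOn.image_subset

theorem inv_norm_deriv_le_of_bijOn_ball {r : ℝ} (hU : IsOpen U) (hg : DifferentiableOn ℂ g U)
    (hz : z ∈ U) (hbij : BijOn g U (ball (g z) R)) (hsubset : U ⊆ ball z r) :
    ‖deriv g z‖⁻¹ ≤ r / R := by
  have hR : 0 < R := pos_of_mem_ball (hbij.mapsTo hz)
  have hmaps : MapsTo (Function.invFunOn g U) (ball (g z) R)
      (closedBall (Function.invFunOn g U (g z)) r) := by
    rw [hbij.injOn.leftInvOn_invFunOn hz]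
    exact hbij.surjOn.mapsTo_invFunOn.mono_right (hsubset.trans ball_subset_closedBall)
  have hschwarz := Complex.norm_deriv_le_div_of_mapsTo_ball
    (differentiableOn_invFunOn hU hg hbij) hmaps hR
  rwa [deriv_invFunOn hU hg hbij.injOn hz, norm_inv] at hschwarz

end ConformalMap

/-- Let `U ⊆ 𝔻` be an open simply connected domain containing `0`, and
let `g : U → 𝔻` be the uniformizing map with `g 0 = 0` and `g' 0 = e^t > 0` (necessarily
`t ≥ 0`). Then the closed disc of radius `e^{−t}/8` is contained in `U`, and its image
under `g` contains the closed disc of radius `1/32`. -/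
theorem cle_gasket_stmt_14
    (U : Set ℂ) (hU_open : IsOpen U) (hU_sub : U ⊆ ball (0 : ℂ) 1)
    (hU_sc : SimplyConnectedSpace U) (h0 : (0 : ℂ) ∈ U)
    (g : ℂ → ℂ) (hg_holo : DifferentiableOn ℂ g U)
    (hg_bij : BijOn g U (ball (0 : ℂ) 1))
    (hg0 : g 0 = 0)
    (t : ℝ) (hg'0 : deriv g 0 = ((Real.exp t : ℝ) : ℂ)) :
    0 ≤ t ∧
    closedBall (0 : ℂ) (Real.exp (-t) / 8) ⊆ U ∧
    closedBall (0 : ℂ) (1 / 32) ⊆ g '' closedBall (0 : ℂ) (Real.exp (-t) / 8) := by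
  have hg_norm : ‖deriv g 0‖ = Real.exp t := by
    rw [hg'0, Complex.norm_real, Real.norm_of_nonneg (Real.exp_pos t).le]
  have hbij : BijOn g U (ball (g 0) 1) := by rwa [hg0]
  have hdisc : closedBall (0 : ℂ) (Real.exp (-t) / 8) ⊆ U := by
    have hkoebe := ball_subset_of_bijOn_ball hU_open hg_holo h0 hbij
    rw [hg_norm, ← Real.exp_neg] at hkoebe
    exact (closedBall_subset_ball (by linarith [Real.exp_pos (-t)])).trans hkoebe
  refine ⟨?_, hdisc, ?_⟩
  · have hschwarz := inv_norm_deriv_le_of_bijOn_ball hU_open hg_holo h0 hbij hU_sub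
    rwa [hg_norm, ← Real.exp_neg, div_one, Real.exp_le_one_iff, neg_nonpos] at hschwarz
  · have hkoebe := koebe_quarter_closedBall (by positivity)
      ((hg_holo.mono hdisc).diffContOnCl_ball subset_rfl)
      (hbij.injOn.mono (ball_subset_closedBall.trans hdisc))
    have hradius : ‖deriv g 0‖ * (Real.exp (-t) / 8) / 4 = 1 / 32 := by
      rw [hg_norm, mul_div_assoc', ← Real.exp_add, add_neg_cancel, Real.exp_zero]
      norm_num
    rwa [hg0, hradius] at hkoebe
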